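/- Let G = (V,E) be a finite connected undirected graph with positive symmetric edge weights ω and total edge weight ω(G), and let G' be obtained from G by adding a new edge {a,b} of weight w > 0. Then for all vertices i and j, the commute time in G' satisfies κ'_{ij} ≤ (1 + w/ω(G))·κ_{ij}. -/

import Mathlib

open Finset

variable {V : Type*}

/-- The total weight incident to a vertex: `ω(i) = Σ_l ω(i,l)`. -/
noncomputable def vWeight [Fintype V] (w : V → V → ℝ) (i : V) : ℝ :=
  ∑ l, w i l

/-- The total weight of the graph (each edge counted once): `ω(G)`. -/
noncomputable def gWeight [Fintype V] (w : V → V → ℝ) : ℝ :=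
  (∑ i, ∑ l, w i l) / 2

/-- Transition probabilities of the random walk on the weighted graph:
from `i`, move to `l` with probability `ω(i,l)/ω(i)`. -/
noncomputable def walkStep [Fintype V] (w : V → V → ℝ) (i l : V) : ℝ :=
  w i l / vWeight w i

/-- `w` is a system of positive symmetric edge weights on a finite connected undirected
graph: symmetric, nonnegative, zero on the diagonal (and on non-edges), and the graph
whose edges are the pairs with positive weight is connected. -/
def IsWeight [Fintype V] (w : V → V → ℝ) : Prop :=
  (∀ a b, w a b = w b a) ∧ (∀ a b, 0 ≤ w a b) ∧ (∀ a, w a a = 0) ∧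
    (∀ a b, Relation.ReflTransGen (fun x y => 0 < w x y) a b)

/-- `hitSurv p j n i` is the probability that the Markov chain with transition kernel `p`
started at `i` has not visited `j` at any of the times `0, 1, …, n`. -/
noncomputable def hitSurv {S : Type*} [Fintype S] [DecidableEq S] (p : S → S → ℝ) (j : S) :
    ℕ → S → ℝ
  | 0 => fun i => if i = j then 0 else 1
  | n + 1 => fun i => if i = j then 0 else ∑ l, p i l * hitSurv p j n l

/-- Expected hitting time of `j` from `i`: the expected number of steps for the chain
started at `i` to first reach `j`, computed as `Σ_n P(T_j > n)`. -/
noncomputable def hitTime {S : Type*} [Fintype S] [DecidableEq S] (p : S → S → ℝ)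
    (i j : S) : ℝ :=
  ∑' n : ℕ, hitSurv p j n i

/-- A unit-current potential from `i` to `j`: Kirchhoff's equations when a unit current
enters at `i` and leaves at `j`. -/
def IsUnitPotential [Fintype V] (w : V → V → ℝ) (i j : V) (φ : V → ℝ) : Prop :=
  (∀ k, k ≠ i → k ≠ j → ∑ l, w k l * (φ k - φ l) = 0) ∧
    (∑ l, w i l * (φ i - φ l) = 1) ∧
    (∑ l, w j l * (φ j - φ l) = -1)

/-- `R` is the effective-resistance matrix of the weighted graph `w`:
`R a a = 0`, and for `a ≠ b`, `R a b = V_a - V_b` for a unit-current potential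
from `a` to `b`. -/
def IsResistance [Fintype V] (w : V → V → ℝ) (R : V → V → ℝ) : Prop :=
  (∀ a, R a a = 0) ∧
    ∀ a b, a ≠ b → ∃ φ, IsUnitPotential w a b φ ∧ R a b = φ a - φ b

/-- The weight function of an unweighted graph: weight `1` on edges, `0` elsewhere. -/
noncomputable def aw (G : SimpleGraph V) [DecidableRel G.Adj] (a b : V) : ℝ :=
  if G.Adj a b then 1 else 0

/-- Probability of a given trajectory: `trajProb p i xs` is the probability that the
chain started at `i` successively visits the vertices of the list `xs`. -/
noncomputable def trajProb {S : Type*} [Fintype S] (p : S → S → ℝ) : S → List S → ℝ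
  | _, [] => 1
  | i, x :: xs => p i x * trajProb p x xs

/-- Probability that the walk started at `i` has not visited every vertex by time `n`. -/
noncomputable def notCoveredProb [Fintype V] [DecidableEq V] (p : V → V → ℝ) (n : ℕ)
    (i : V) : ℝ :=
  ∑ xs : Fin n → V, trajProb p i (List.ofFn xs) *
    (if (i :: List.ofFn xs).toFinset = Finset.univ then 0 else 1)

/-- The cover time from `i`: the expected number of steps for the walk started at `i`
to have visited every vertex, computed as `Σ_n P(T_cov > n)`. -/
noncomputable def coverTime [Fintype V] [DecidableEq V] (p : V → V → ℝ) (i : V) : ℝ :=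
  ∑' n : ℕ, notCoveredProb p n i

/-- `visitSurv p j k n i` is the probability that the chain started at `i` is at `k` at
time `n` without having visited `j` at any of the times `0, …, n`. -/
noncomputable def visitSurv [Fintype V] [DecidableEq V] (p : V → V → ℝ) (j k : V) :
    ℕ → V → ℝ
  | 0 => fun i => if i = j then 0 else if i = k then 1 else 0
  | n + 1 => fun i => if i = j then 0 else ∑ l, p i l * visitSurv p j k n l

/-- `expVisits p i j k` is the expected number of visits to `k` (counting time `0`) of
the chain started at `i` strictly before its first visit to `j`. -/
noncomputable def expVisits [Fintype V] [DecidableEq V] (p : V → V → ℝ) (i j k : V) : ℝ :=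
  ∑' n : ℕ, visitSurv p j k n i

/-- `reachBeforeAux p i j n l` is the probability that the walk started at `l` reaches `j`
within `n` steps without visiting `i` first. -/
noncomputable def reachBeforeAux [Fintype V] [DecidableEq V] (p : V → V → ℝ) (i j : V) :
    ℕ → V → ℝ
  | 0 => fun l => if l = j then 1 else 0
  | n + 1 => fun l =>
      if l = j then 1 else if l = i then 0 else ∑ m, p l m * reachBeforeAux p i j n m

/-- The probability that the walk started at `i` reaches `j` before returning to `i`:
one step from `i` to `l`, then reach `j` before `i` (monotone limit in `n`). -/
noncomputable def escapeProb [Fintype V] [DecidableEq V] (p : V → V → ℝ) (i j : V) : ℝ :=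
  ∑ l, p i l * ⨆ n, reachBeforeAux p i j n l

/-- `hitSurvSet p F n x` is the probability that the chain started at `x` has not visited
the set `F` at any of the times `0, …, n`. -/
noncomputable def hitSurvSet {S : Type*} [Fintype S] (p : S → S → ℝ) (F : S → Prop)
    [DecidablePred F] : ℕ → S → ℝ
  | 0 => fun x => if F x then 0 else 1
  | n + 1 => fun x => if F x then 0 else ∑ y, p x y * hitSurvSet p F n y

/-- Expected hitting time of the set `F` from `x`, computed as `Σ_n P(T_F > n)`. -/
noncomputable def hitTimeSet {S : Type*} [Fintype S] (p : S → S → ℝ) (F : S → Prop)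
    [DecidablePred F] (x : S) : ℝ :=
  ∑' n : ℕ, hitSurvSet p F n x

/-- The associated chain `𝒢` on pairs `(P, i)` (visited set, current vertex): from
`(P, i)` it moves to `(P ∪ {j}, j)` with probability `ω(i,j)/ω(i)`. -/
noncomputable def pairStep [Fintype V] [DecidableEq V] (w : V → V → ℝ)
    (s t : Finset V × V) : ℝ :=
  if t.1 = insert t.2 s.1 then walkStep w s.2 t.2 else 0

/-- `exitProbAux p P j n i` is the probability that the walk started at `i` leaves `P`
within `n` steps and that the first vertex visited outside `P` is `j`. -/
noncomputable def exitProbAux [Fintype V] [DecidableEq V] (p : V → V → ℝ) (P : Finset V)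
    (j : V) : ℕ → V → ℝ
  | 0 => fun i => if i ∈ P then 0 else if i = j then 1 else 0
  | n + 1 => fun i =>
      if i ∈ P then ∑ l, p i l * exitProbAux p P j n l else if i = j then 1 else 0

/-- The probability that the first vertex outside `P` visited by the walk started at `i`
is `j` (monotone limit in the number of allowed steps). -/
noncomputable def exitProb [Fintype V] [DecidableEq V] (p : V → V → ℝ) (P : Finset V)
    (i j : V) : ℝ :=
  ⨆ n, exitProbAux p P j n i

/-- The negated weighted Laplacian `Δ` of the weighted graph `w` on `Fin n`. -/
noncomputable def negLaplacian (n : ℕ) (w : Fin n → Fin n → ℝ) :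
    Matrix (Fin n) (Fin n) ℝ :=
  Matrix.of fun k l => if k = l then -(∑ m, w k m) else w k l

/-- `Δ₂`: the negated weighted Laplacian with its first row replaced by the first row of
the identity matrix. -/
noncomputable def delta2 (n : ℕ) (hn : 0 < n) (w : Fin n → Fin n → ℝ) :
    Matrix (Fin n) (Fin n) ℝ :=
  (negLaplacian n w).updateRow ⟨0, hn⟩ (fun l => if l = ⟨0, hn⟩ then 1 else 0)

/-- The weight function obtained from `w` by adding weight `u` on the edge `{a, b}`. -/
noncomputable def addEdge [DecidableEq V] (w : V → V → ℝ) (a b : V) (u : ℝ)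
    (x y : V) : ℝ :=
  w x y + (if (x = a ∧ y = b) ∨ (x = b ∧ y = a) then u else 0)

/-- The weighted Laplacian, `(L f)(x) = Σ_l ω(x,l) (f(x) - f(l))`. -/
noncomputable def weightedLap [Fintype V] (w : V → V → ℝ) (f : V → ℝ) (x : V) : ℝ :=
  ∑ l, w x l * (f x - f l)

/-- The Dirichlet form, with each edge counted in both directions. -/
noncomputable def dirichletForm [Fintype V] (w : V → V → ℝ) (f g : V → ℝ) : ℝ :=
  ∑ x, ∑ l, w x l * ((f x - f l) * (g x - g l))

section Dirichlet

variable [Fintype V] {w : V → V → ℝ}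

theorem dirichletForm_eq_sum_mul_lap (hsymm : ∀ x y, w x y = w y x) (f g : V → ℝ) :
    dirichletForm w f g = 2 * ∑ x, g x * weightedLap w f x := by
  have hswap : ∑ x, ∑ l, w x l * ((f x - f l) * g l) =
      -∑ x, ∑ l, w x l * ((f x - f l) * g x) := by
    rw [Finset.sum_comm, ← Finset.sum_neg_distrib]
    refine Finset.sum_congr rfl fun x _ => ?_
    rw [← Finset.sum_neg_distrib]
    refine Finset.sum_congr rfl fun l _ => ?_
    rw [hsymm l x]
    ring
  have hlap : ∑ x, g x * weightedLap w f x = ∑ x, ∑ l, w x l * ((f x - f l) * g x) := by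
    refine Finset.sum_congr rfl fun x _ => ?_
    rw [weightedLap, Finset.mul_sum]
    exact Finset.sum_congr rfl fun l _ => by ring
  simp only [dirichletForm, mul_sub, Finset.sum_sub_distrib] at hswap hlap ⊢
  linarith

theorem dirichletForm_self_nonneg (hw : ∀ x y, 0 ≤ w x y) (f : V → ℝ) :
    0 ≤ dirichletForm w f f :=
  Finset.sum_nonneg fun _ _ => Finset.sum_nonneg fun _ _ =>
    mul_nonneg (hw _ _) (mul_self_nonneg _)

theorem dirichletForm_self_mono {w' : V → V → ℝ} (h : ∀ x y, w x y ≤ w' x y) (f : V → ℝ) :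
    dirichletForm w f f ≤ dirichletForm w' f f :=
  Finset.sum_le_sum fun _ _ => Finset.sum_le_sum fun _ _ =>
    mul_le_mul_of_nonneg_right (h _ _) (mul_self_nonneg _)

theorem dirichletForm_combination (f g : V → ℝ) (s t : ℝ) :
    dirichletForm w (fun x => s * f x - t * g x) (fun x => s * f x - t * g x) =
      s ^ 2 * dirichletForm w f f - 2 * s * t * dirichletForm w f g +
        t ^ 2 * dirichletForm w g g := by
  simp only [dirichletForm, Finset.mul_sum, ← Finset.sum_sub_distrib, ← Finset.sum_add_distrib]
  exact Finset.sum_congr rfl fun x _ => Finset.sum_congr rfl fun l _ => by ring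

theorem sum_weightedLap (hsymm : ∀ x y, w x y = w y x) (f : V → ℝ) :
    ∑ x, weightedLap w f x = 0 := by
  have h := dirichletForm_eq_sum_mul_lap hsymm f (fun _ => 1)
  simpa [dirichletForm] using h.symm

theorem eq_of_dirichletForm_self_eq_zero (hw : IsWeight w) {f : V → ℝ}
    (h : dirichletForm w f f = 0) (x y : V) : f x = f y := by
  have hterm : ∀ x l, 0 ≤ w x l * ((f x - f l) * (f x - f l)) := fun x l =>
    mul_nonneg (hw.2.1 x l) (mul_self_nonneg _)
  have hedge : ∀ x l, 0 < w x l → f x = f l := by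
    intro x l hxl
    have hx := (Finset.sum_eq_zero_iff_of_nonneg
      (fun x _ => Finset.sum_nonneg fun l _ => hterm x l)).1 h x (Finset.mem_univ _)
    have hl := (Finset.sum_eq_zero_iff_of_nonneg (fun l _ => hterm x l)).1 hx l
      (Finset.mem_univ _)
    have := (mul_eq_zero.1 hl).resolve_left hxl.ne'
    linarith [mul_self_eq_zero.1 this]
  induction hw.2.2.2 x y with
  | refl => rfl
  | tail _ hbc ih => exact ih.trans (hedge _ _ hbc)

theorem vWeight_nonneg (hw : IsWeight w) (x : V) : 0 ≤ vWeight w x :=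
  Finset.sum_nonneg fun l _ => hw.2.1 x l

theorem walkStep_nonneg (hw : IsWeight w) (x y : V) : 0 ≤ walkStep w x y :=
  div_nonneg (hw.2.1 x y) (vWeight_nonneg hw x)

theorem vWeight_pos (hw : IsWeight w) {x y : V} (hxy : x ≠ y) : 0 < vWeight w x := by
  rcases Relation.ReflTransGen.cases_head (hw.2.2.2 x y) with h | ⟨z, hz, _⟩
  · exact absurd h hxy
  · exact hz.trans_le (Finset.single_le_sum (f := fun l => w x l) (fun l _ => hw.2.1 x l)
      (Finset.mem_univ z))

theorem sum_vWeight : ∑ x, vWeight w x = 2 * gWeight w := by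
  simp only [vWeight, gWeight]
  ring

theorem gWeight_pos (hw : IsWeight w) {x y : V} (hxy : x ≠ y) : 0 < gWeight w := by
  have h := Finset.single_le_sum (f := vWeight w) (fun l _ => vWeight_nonneg hw l)
    (Finset.mem_univ x)
  linarith [vWeight_pos hw hxy, sum_vWeight (w := w)]

theorem weightedLap_eq (f : V → ℝ) (x : V) :
    weightedLap w f x = vWeight w x * f x - ∑ l, w x l * f l := by
  simp only [weightedLap, vWeight, mul_sub, Finset.sum_sub_distrib, Finset.sum_mul]

/-- Multiplying the averaging operator of the walk by the vertex weight. -/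
theorem vWeight_mul_sum_walkStep {x : V} (hx : vWeight w x ≠ 0) (f : V → ℝ) :
    vWeight w x * ∑ l, walkStep w x l * f l = ∑ l, w x l * f l := by
  rw [Finset.mul_sum]
  refine Finset.sum_congr rfl fun l _ => ?_
  rw [walkStep]
  field_simp

/-- The Poisson problem `L f = ω` away from `j`, `f(j) = 0`, has a nonnegative solution. -/
theorem exists_nonneg_weightedLap_eq [DecidableEq V] (hw : IsWeight w) (j : V) :
    ∃ f : V → ℝ, (∀ x, 0 ≤ f x) ∧ ∀ x, x ≠ j → weightedLap w f x = vWeight w x := by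
  let T : (V → ℝ) →ₗ[ℝ] (V → ℝ) :=
    { toFun := fun f x => if x = j then f j else weightedLap w f x
      map_add' := fun f g => by
        ext x
        by_cases hx : x = j
        · simp [hx]
        · simp only [hx, if_false, Pi.add_apply, weightedLap, ← Finset.sum_add_distrib]
          exact Finset.sum_congr rfl fun l _ => by ring
      map_smul' := fun c f => by
        ext x
        by_cases hx : x = j
        · simp [hx]
        · simp only [hx, if_false, Pi.smul_apply, smul_eq_mul, weightedLap, Finset.mul_sum,
            RingHom.id_apply]
          exact Finset.sum_congr rfl fun l _ => by ring }
  have hT : ∀ f x, T f x = if x = j then f j else weightedLap w f x := fun _ _ => rfl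
  have hinj : Function.Injective T := by
    rw [injective_iff_map_eq_zero]
    intro f hf
    have hfj : f j = 0 := by simpa [hT] using congrFun hf j
    have hE : dirichletForm w f f = 0 := by
      rw [dirichletForm_eq_sum_mul_lap hw.1, Finset.sum_eq_zero, mul_zero]
      intro x _
      by_cases hx : x = j
      · rw [hx, hfj, zero_mul]
      · have : weightedLap w f x = 0 := by simpa [hT, hx] using congrFun hf x
        rw [this, mul_zero]
    ext x
    rw [eq_of_dirichletForm_self_eq_zero hw hE x j, hfj, Pi.zero_apply]
  obtain ⟨f, hf⟩ := LinearMap.injective_iff_surjective.1 hinj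
    (fun x => if x = j then 0 else vWeight w x)
  have hfj : f j = 0 := by simpa [hT] using congrFun hf j
  have hlap : ∀ x, x ≠ j → weightedLap w f x = vWeight w x := fun x hx => by
    simpa [hT, hx] using congrFun hf x
  refine ⟨f, fun y => ?_, hlap⟩
  have : Nonempty V := ⟨j⟩
  obtain ⟨x, hx⟩ := Finite.exists_min f
  have hxj : x = j := by
    by_contra hne
    have hle : weightedLap w f x ≤ 0 := Finset.sum_nonpos fun l _ =>
      mul_nonpos_of_nonneg_of_nonpos (hw.2.1 x l) (sub_nonpos.2 (hx l))
    linarith [hlap x hne, vWeight_pos hw hne]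
  rw [← hfj, ← hxj]
  exact hx y

end Dirichlet

section HittingTime

variable [Fintype V] [DecidableEq V] {w : V → V → ℝ}

theorem hitSurv_nonneg {p : V → V → ℝ} (hp : ∀ x y, 0 ≤ p x y) (j : V) (n : ℕ) (x : V) :
    0 ≤ hitSurv p j n x := by
  induction n generalizing x with
  | zero =>
    simp only [hitSurv]
    split_ifs <;> norm_num
  | succ n ih =>
    simp only [hitSurv]
    split_ifs
    · exact le_rfl
    · exact Finset.sum_nonneg fun l _ => mul_nonneg (hp x l) (ih l)

theorem hitSurv_self (p : V → V → ℝ) (j : V) (n : ℕ) : hitSurv p j n j = 0 := by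
  cases n <;> simp [hitSurv]

theorem hitTime_self (p : V → V → ℝ) (j : V) : hitTime p j j = 0 := by
  simp [hitTime, hitSurv_self]

theorem sum_range_hitSurv_le {p : V → V → ℝ} (hp : ∀ x y, 0 ≤ p x y) {j : V} {f : V → ℝ}
    (hf : ∀ x, 0 ≤ f x) (hsuper : ∀ x, x ≠ j → 1 + ∑ l, p x l * f l ≤ f x) (n : ℕ) (x : V) :
    ∑ k ∈ Finset.range n, hitSurv p j k x ≤ f x := by
  induction n generalizing x with
  | zero => simpa using hf x
  | succ n ih =>
    by_cases hx : x = j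
    · subst hx
      simpa [hitSurv_self] using hf x
    · refine le_trans ?_ (hsuper x hx)
      rw [Finset.sum_range_succ']
      simp only [hitSurv, hx, if_false]
      rw [Finset.sum_comm, add_comm]
      simp only [← Finset.mul_sum]
      gcongr with l
      · exact hp x l
      · exact ih l

theorem summable_hitSurv (hw : IsWeight w) (j x : V) :
    Summable fun n => hitSurv (walkStep w) j n x := by
  obtain ⟨f, hf, hlap⟩ := exists_nonneg_weightedLap_eq hw j
  refine summable_of_sum_range_le (fun n => hitSurv_nonneg (walkStep_nonneg hw) j n x)
    fun n => sum_range_hitSurv_le (walkStep_nonneg hw) hf (fun y hy => ?_) n x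
  have hpos := vWeight_pos hw hy
  have h := hlap y hy
  rw [weightedLap_eq, ← vWeight_mul_sum_walkStep hpos.ne'] at h
  refine le_of_mul_le_mul_left ?_ hpos
  linarith

theorem hitTime_eq_one_add (hw : IsWeight w) {x j : V} (hx : x ≠ j) :
    hitTime (walkStep w) x j = 1 + ∑ l, walkStep w x l * hitTime (walkStep w) l j := by
  rw [hitTime, (summable_hitSurv hw j x).tsum_eq_zero_add]
  simp only [hitSurv, hx, if_false, hitTime]
  rw [Summable.tsum_finsetSum fun l _ => (summable_hitSurv hw j l).mul_left _]
  simp only [tsum_mul_left]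

theorem weightedLap_hitTime (hw : IsWeight w) (j x : V) :
    weightedLap w (fun y => hitTime (walkStep w) y j) x =
      vWeight w x - if x = j then 2 * gWeight w else 0 := by
  have hne : ∀ x, x ≠ j →
      weightedLap w (fun y => hitTime (walkStep w) y j) x = vWeight w x := by
    intro x hx
    rw [weightedLap_eq, hitTime_eq_one_add hw hx,
      ← vWeight_mul_sum_walkStep (vWeight_pos hw hx).ne']
    ring
  by_cases hx : x = j
  · subst hx
    have hsum := sum_weightedLap hw.1 (fun y => hitTime (walkStep w) y x)
    have htot := sum_vWeight (w := w)
    rw [← Finset.add_sum_erase _ _ (Finset.mem_univ x)] at hsum htot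
    rw [Finset.sum_congr rfl fun y hy => hne y (Finset.ne_of_mem_erase hy)] at hsum
    rw [if_pos rfl]
    linarith
  · simp [hne x hx, hx]

/-- The difference of hitting times is the potential of a current `2 ω(G)` from `i` to `j`. -/
theorem dirichletForm_hitTime_sub (hw : IsWeight w) (i j : V) (g : V → ℝ) :
    dirichletForm w (fun x => hitTime (walkStep w) x j - hitTime (walkStep w) x i) g =
      4 * gWeight w * (g i - g j) := by
  have hlap : ∀ x,
      weightedLap w (fun x => hitTime (walkStep w) x j - hitTime (walkStep w) x i) x =
        (if x = i then 2 * gWeight w else 0) - if x = j then 2 * gWeight w else 0 := by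
    intro x
    have hj := weightedLap_hitTime hw j x
    have hi := weightedLap_hitTime hw i x
    rw [weightedLap_eq] at hi hj ⊢
    simp only [mul_sub, Finset.sum_sub_distrib]
    linarith
  rw [dirichletForm_eq_sum_mul_lap hw.1]
  simp only [hlap, mul_sub, mul_ite, mul_zero, Finset.sum_sub_distrib, Finset.sum_ite_eq',
    Finset.mem_univ, if_true]
  ring

/-- Rayleigh monotonicity: `κ / ω(G)` does not increase when edge weights increase. -/
theorem gWeight_mul_commute_le {w' : V → V → ℝ} (hw : IsWeight w) (hw' : IsWeight w')
    (hle : ∀ x y, w x y ≤ w' x y) (hpos : 0 < gWeight w) (i j : V) :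
    gWeight w * (hitTime (walkStep w') i j + hitTime (walkStep w') j i) ≤
      gWeight w' * (hitTime (walkStep w) i j + hitTime (walkStep w) j i) := by
  have hpos' : 0 < gWeight w' := hpos.trans_le <| by
    unfold gWeight
    gcongr
    exact hle _ _
  set f := fun x => hitTime (walkStep w) x j - hitTime (walkStep w) x i with hf
  set f' := fun x => hitTime (walkStep w') x j - hitTime (walkStep w') x i with hf'
  have hff := dirichletForm_hitTime_sub hw i j f
  have hff' := dirichletForm_hitTime_sub hw i j f'
  have hmono := (dirichletForm_self_mono hle f').trans_eq (dirichletForm_hitTime_sub hw' i j f')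
  have hnonneg := dirichletForm_self_nonneg hw.2.1
    (fun x => gWeight w' * f x - gWeight w * f' x)
  rw [dirichletForm_combination] at hnonneg
  rw [← hf] at hff hff'
  have hk : f i - f j = hitTime (walkStep w) i j + hitTime (walkStep w) j i := by
    simp [hf, hitTime_self]
  have hk' : f' i - f' j = hitTime (walkStep w') i j + hitTime (walkStep w') j i := by
    simp [hf', hitTime_self]
  rw [hff, hff'] at hnonneg
  rw [← hk, ← hk']
  have hprod : 0 < 4 * gWeight w * gWeight w' := by positivity
  refine le_of_mul_le_mul_left ?_ hprod
  linarith [mul_le_mul_of_nonneg_left hmono (sq_nonneg (gWeight w))]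

end HittingTime

section AddEdge

variable [DecidableEq V] {w : V → V → ℝ}

theorem le_addEdge (a b : V) {u : ℝ} (hu : 0 ≤ u) (x y : V) : w x y ≤ addEdge w a b u x y := by
  unfold addEdge
  split_ifs <;> linarith

theorem IsWeight.addEdge [Fintype V] (hw : IsWeight w) {a b : V} (hab : a ≠ b) {u : ℝ}
    (hu : 0 ≤ u) : IsWeight (addEdge w a b u) := by
  refine ⟨fun x y => ?_, fun x y => (hw.2.1 x y).trans (le_addEdge a b hu x y), fun x => ?_,
    fun x y => Relation.ReflTransGen.mono (fun s t hst => hst.trans_le (le_addEdge a b hu s t)) _ _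
      (hw.2.2.2 x y)⟩
  · unfold _root_.addEdge
    rw [hw.1 x y]
    congr 2
    apply propext
    tauto
  · unfold _root_.addEdge
    rw [hw.2.2.1 x, if_neg, zero_add]
    rintro (⟨rfl, h⟩ | ⟨rfl, h⟩)
    · exact hab h
    · exact hab h.symm

theorem gWeight_addEdge [Fintype V] {a b : V} (hab : a ≠ b) (u : ℝ) :
    gWeight (addEdge w a b u) = gWeight w + u := by
  have hsplit : ∀ x y, addEdge w a b u x y =
      w x y + ((if x = a then if y = b then u else 0 else 0) +
        if x = b then if y = a then u else 0 else 0) := by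
    intro x y
    unfold addEdge
    grind
  have hsum : ∀ c d : V, ∑ x, ∑ y, (if x = c then if y = d then u else 0 else 0) = u := by
    intro c d
    rw [Finset.sum_comm]
    simp
  simp only [gWeight, hsplit, Finset.sum_add_distrib, hsum]
  ring

end AddEdge

/-- Adding an edge `{a,b}` of weight `u > 0` increases the commute
time by a factor of at most `1 + u/ω(G)`: `κ'_{ij} ≤ (1 + u/ω(G))·κ_{ij}`. -/
theorem commute_time_edge_addition
    {V : Type*} [Fintype V] [DecidableEq V] (w : V → V → ℝ) (hw : IsWeight w)
    (a b : V) (hab : a ≠ b) (u : ℝ) (hu : 0 < u) (i j : V) :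
    hitTime (walkStep (addEdge w a b u)) i j + hitTime (walkStep (addEdge w a b u)) j i ≤
      (1 + u / gWeight w) *
        (hitTime (walkStep w) i j + hitTime (walkStep w) j i) := by
  have hpos := gWeight_pos hw hab
  have h := gWeight_mul_commute_le hw (hw.addEdge hab hu.le) (le_addEdge a b hu.le) hpos i j
  rw [gWeight_addEdge hab] at h
  refine le_of_mul_le_mul_left (h.trans_eq ?_) hpos
  field_simp
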